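/- Let ζ>0, ν>0 and ε>0. For every sequence (q_n)_{n≥1} of real polynomials with deg q_n ≤ n and q_n(0) = 1, there exist a finite Borel measure ρ supported on (0,1] and a nonincreasing sequence (λ_k)_{k≥1} of positive reals such that: (i) ρ is supported on the set {λ_k : k ≥ 1}; (ii) lim_{k→∞} λ_k·k^ν = 1; (iii) lim_{λ→0+} ρ((0,λ])/λ^ζ = 1; and (iv) the set { n ≥ 1 : (1/2)∫ q_n(λ)² ρ(dλ) > n^{-2ζ-ε} } is infinite. -/

import Mathlib

open MeasureTheory Filter Set Polynomial

lemma pslb_alg (ζ : ℝ) (hζ : 0 < ζ) (n : ℕ) : ∀ c : ℕ → ℝ,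
    (c 0) ^ 2 / ζ * ∏ j ∈ Finset.range n, (((j : ℝ) + 1) / ((j : ℝ) + 1 + ζ)) ^ 2 ≤
      ∑ i ∈ Finset.range (n + 1), ∑ j ∈ Finset.range (n + 1), c i * c j / ((i : ℝ) + j + ζ) := by
  induction n with
  | zero => intro c; simp; apply le_of_eq; ring
  | succ n ih =>
    intro c
    set m : ℝ := (n : ℝ) + 1 with hm
    have hmpos : 0 < m := by positivity
    set d : ℕ → ℝ := fun i => c i * ((i - m) / (i + m + ζ)) with hd
    have key : ∑ i ∈ Finset.range (n + 1 + 1), ∑ j ∈ Finset.range (n + 1 + 1),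
          c i * c j / ((i : ℝ) + j + ζ) =
        ∑ i ∈ Finset.range (n + 1 + 1), ∑ j ∈ Finset.range (n + 1 + 1),
          d i * d j / ((i : ℝ) + j + ζ) +
        (2 * m + ζ) * (∑ i ∈ Finset.range (n + 1 + 1), c i / ((i : ℝ) + m + ζ)) ^ 2 := by
      rw [pow_two, Finset.sum_mul_sum, Finset.mul_sum, ← Finset.sum_add_distrib]
      refine Finset.sum_congr rfl fun i _ => ?_
      rw [Finset.mul_sum, ← Finset.sum_add_distrib]
      refine Finset.sum_congr rfl fun j _ => ?_
      simp only [hd]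
      have h1 : (i : ℝ) + m + ζ ≠ 0 := by positivity
      have h2 : (j : ℝ) + m + ζ ≠ 0 := by positivity
      have h3 : (i : ℝ) + j + ζ ≠ 0 := by positivity
      field_simp
      ring
    have hdn : d (n + 1) = 0 := by simp [hd, hm]
    have hred : ∑ i ∈ Finset.range (n + 1 + 1), ∑ j ∈ Finset.range (n + 1 + 1),
          d i * d j / ((i : ℝ) + j + ζ) = ∑ i ∈ Finset.range (n + 1), ∑ j ∈ Finset.range (n + 1),
          d i * d j / ((i : ℝ) + j + ζ) := by
      rw [Finset.sum_range_succ]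
      simp only [hdn, zero_mul, zero_div, Finset.sum_const_zero, add_zero]
      refine Finset.sum_congr rfl fun i _ => ?_
      rw [Finset.sum_range_succ, hdn]
      simp
    rw [key, hred]
    have h := ih d
    have hd0 : (d 0) ^ 2 = (c 0) ^ 2 * (m / (m + ζ)) ^ 2 := by
      simp only [hd]
      push_cast
      rw [zero_sub, zero_add, neg_div]
      ring
    rw [hd0] at h
    rw [Finset.prod_range_succ]
    have h5 : 0 ≤ (2 * m + ζ) *
      (∑ i ∈ Finset.range (n + 1 + 1), c i / ((i : ℝ) + m + ζ)) ^ 2 := by positivity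
    refine le_trans (le_of_eq ?_) (h.trans (le_add_of_nonneg_right h5))
    ring

lemma pslb_prod (ζ : ℝ) (hζ : 0 < ζ) (n : ℕ) (hn : 1 ≤ n) :
    Real.exp (-(2 * ζ)) * (n : ℝ) ^ (-(2 * ζ)) ≤
      ∏ j ∈ Finset.range n, (((j : ℝ) + 1) / ((j : ℝ) + 1 + ζ)) ^ 2 := by
  have hn' : (0 : ℝ) < n := by exact_mod_cast hn
  have h1 : ∏ j ∈ Finset.range n, Real.exp (-(2 * ζ) * ((j : ℝ) + 1)⁻¹) ≤
      ∏ j ∈ Finset.range n, (((j : ℝ) + 1) / ((j : ℝ) + 1 + ζ)) ^ 2 := by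
    refine Finset.prod_le_prod (fun _ _ => (Real.exp_pos _).le) fun j _ => ?_
    have hj : (0 : ℝ) < (j : ℝ) + 1 := by positivity
    have h2 : ((j : ℝ) + 1 + ζ) / ((j : ℝ) + 1) ≤ Real.exp (ζ * ((j : ℝ) + 1)⁻¹) := by
      refine le_trans (le_of_eq ?_) (Real.add_one_le_exp _)
      field_simp
      ring
    have h3 : Real.exp (-(ζ * ((j : ℝ) + 1)⁻¹)) ≤ ((j : ℝ) + 1) / ((j : ℝ) + 1 + ζ) := by
      rw [Real.exp_neg, ← inv_div]
      exact inv_anti₀ (by positivity) h2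
    calc _ = (Real.exp (-(ζ * ((j : ℝ) + 1)⁻¹))) ^ 2 := by
            rw [← Real.exp_nat_mul]; congr 1; push_cast; ring
      _ ≤ _ := by gcongr
  refine le_trans ?_ h1
  rw [← Real.exp_sum, ← Finset.mul_sum, Real.rpow_def_of_pos hn', ← Real.exp_add]
  apply Real.exp_le_exp.2
  have h4 := harmonic_le_one_add_log n
  have h5 : ((harmonic n : ℚ) : ℝ) = ∑ j ∈ Finset.range n, ((j : ℝ) + 1)⁻¹ := by
    simp [harmonic]
  rw [h5] at h4
  nlinarith

lemma pslb_int (ζ : ℝ) (hζ : 0 < ζ) (p : Polynomial ℝ) (a b : ℝ) :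
    IntervalIntegrable (fun x : ℝ => (p.eval x) ^ 2 * (ζ * x ^ (ζ - 1))) volume a b := by
  apply IntervalIntegrable.continuousOn_mul
  · exact (intervalIntegral.intervalIntegrable_rpow' (by linarith)).const_mul _
  · exact (p.continuous.pow 2).continuousOn

lemma pslb_lower (ζ : ℝ) (hζ : 0 < ζ) (n : ℕ) (hn : 1 ≤ n) (p : Polynomial ℝ)
    (hdeg : p.natDegree ≤ n) (h0 : p.eval 0 = 1) (a : ℝ) (ha : 0 < a) :
    a ^ ζ * (Real.exp (-(2 * ζ)) * (n : ℝ) ^ (-(2 * ζ))) ≤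
      ∫ x in (0 : ℝ)..a, (p.eval x) ^ 2 * (ζ * x ^ (ζ - 1)) := by
  have hqint : ∫ x in (0 : ℝ)..a, (p.eval x) ^ 2 * (ζ * x ^ (ζ - 1)) =
      a ^ ζ * (ζ * ∑ i ∈ Finset.range (n + 1), ∑ j ∈ Finset.range (n + 1),
        (p.coeff i * a ^ i) * (p.coeff j * a ^ j) / ((i : ℝ) + j + ζ)) := by
    have e1 : ∫ x in (0 : ℝ)..a, (p.eval x) ^ 2 * (ζ * x ^ (ζ - 1)) =
        ∫ x in (0 : ℝ)..a, ∑ i ∈ Finset.range (n + 1), ∑ j ∈ Finset.range (n + 1),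
          (ζ * p.coeff i * p.coeff j) * x ^ ((i : ℝ) + j + ζ - 1) := by
      refine intervalIntegral.integral_congr_ae (ae_of_all _ fun x hx => ?_)
      rw [uIoc_of_le ha.le] at hx
      rw [Polynomial.eval_eq_sum_range' (Nat.lt_succ_of_le hdeg), pow_two, Finset.sum_mul_sum,
        Finset.sum_mul]
      refine Finset.sum_congr rfl fun i _ => ?_
      rw [Finset.sum_mul]
      refine Finset.sum_congr rfl fun j _ => ?_
      rw [show (i : ℝ) + j + ζ - 1 = (i : ℝ) + j + (ζ - 1) by ring, Real.rpow_add hx.1,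
        Real.rpow_add hx.1, Real.rpow_natCast, Real.rpow_natCast]
      ring
    have hii : ∀ i j : ℕ, IntervalIntegrable
        (fun x : ℝ => (ζ * p.coeff i * p.coeff j) * x ^ ((i : ℝ) + j + ζ - 1)) volume 0 a := by
      intro i j
      refine (intervalIntegral.intervalIntegrable_rpow' ?_).const_mul _
      have : (0 : ℝ) ≤ (i : ℝ) + j := by positivity
      linarith
    rw [e1, intervalIntegral.integral_finsetSum]
    · rw [Finset.mul_sum, Finset.mul_sum]
      refine Finset.sum_congr rfl fun i _ => ?_
      rw [intervalIntegral.integral_finsetSum (fun j _ => hii i j)]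
      rw [Finset.mul_sum, Finset.mul_sum]
      refine Finset.sum_congr rfl fun j _ => ?_
      have hij : (0 : ℝ) ≤ (i : ℝ) + j := by positivity
      rw [intervalIntegral.integral_const_mul, integral_rpow (Or.inl (by linarith))]
      rw [sub_add_cancel, Real.zero_rpow (by positivity), Real.rpow_add ha, Real.rpow_add ha,
        Real.rpow_natCast, Real.rpow_natCast]
      ring
    · intro i _
      have := IntervalIntegrable.sum (Finset.range (n + 1)) (fun j _ => hii i j)
      rw [Finset.sum_fn] at this
      exact this
  rw [hqint]
  have h1 := pslb_alg ζ hζ n (fun i => p.coeff i * a ^ i)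
  have h2 := pslb_prod ζ hζ n hn
  have hc : p.coeff 0 = 1 := by rw [Polynomial.coeff_zero_eq_eval_zero, h0]
  simp only [hc, pow_zero, mul_one, one_pow] at h1
  refine mul_le_mul_of_nonneg_left (h2.trans ?_) (by positivity)
  calc _ = ζ * (1 / ζ * ∏ j ∈ Finset.range n, (((j : ℝ) + 1) / ((j : ℝ) + 1 + ζ)) ^ 2) := by
        field_simp
    _ ≤ _ := mul_le_mul_of_nonneg_left h1 hζ.le

noncomputable def pslbA (ν : ℝ) (k : ℕ) : ℝ := ((k : ℝ) + 1) ^ (-ν)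

lemma pslbA_pos (ν : ℝ) (k : ℕ) : 0 < pslbA ν k := by unfold pslbA; positivity

lemma pslbA_anti (ν : ℝ) (hν : 0 < ν) : Antitone (pslbA ν) := by
  intro i j hij
  unfold pslbA
  apply Real.rpow_le_rpow_of_nonpos (by positivity) _ (by linarith)
  have : (i : ℝ) ≤ j := by exact_mod_cast hij
  linarith

lemma pslbA_tendsto (ν : ℝ) (hν : 0 < ν) : Tendsto (pslbA ν) atTop (nhds 0) :=
  (tendsto_rpow_neg_atTop hν).comp
    (tendsto_atTop_add_const_right _ _ tendsto_natCast_atTop_atTop)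

lemma pslb_step (ζ ν ε : ℝ) (hζ : 0 < ζ) (hν : 0 < ν) (hε : 0 < ε)
    (q : ℕ → Polynomial ℝ)
    (hdeg : ∀ n : ℕ, 1 ≤ n → (q n).natDegree ≤ n)
    (hq0 : ∀ n : ℕ, 1 ≤ n → (q n).eval 0 = 1) (K N : ℕ) :
    ∃ n K' : ℕ, N ≤ n ∧ 1 ≤ n ∧ K < K' ∧ (n : ℝ) ^ (-(2 * ζ) - ε) <
      (1/2) * ∫ x in (pslbA ν K')..(pslbA ν K), ((q n).eval x) ^ 2 * (ζ * x ^ (ζ - 1)) := by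
  set a := pslbA ν K with ha
  have hapos : 0 < a := pslbA_pos ν K
  have ht : Tendsto (fun n : ℕ => (n : ℝ) ^ (-ε)) atTop (nhds 0) :=
    (tendsto_rpow_neg_atTop hε).comp tendsto_natCast_atTop_atTop
  have hc : 0 < (1/2) * (a ^ ζ * Real.exp (-(2 * ζ))) := by positivity
  obtain ⟨n, hn1, hnN, hn⟩ := ((eventually_ge_atTop 1).and
    ((eventually_ge_atTop N).and (ht.eventually (gt_mem_nhds hc)))).exists
  have hnpos : (0 : ℝ) < n := by exact_mod_cast hn1
  have hlow := pslb_lower ζ hζ n hn1 (q n) (hdeg n hn1) (hq0 n hn1) a hapos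
  have hlt : (n : ℝ) ^ (-(2 * ζ) - ε) <
      (1/2) * ∫ x in (0 : ℝ)..a, ((q n).eval x) ^ 2 * (ζ * x ^ (ζ - 1)) := by
    rw [sub_eq_add_neg, Real.rpow_add hnpos]
    have hp : 0 < (n : ℝ) ^ (-(2 * ζ)) := by positivity
    calc _ < (n : ℝ) ^ (-(2 * ζ)) * ((1/2) * (a ^ ζ * Real.exp (-(2 * ζ)))) :=
          mul_lt_mul_of_pos_left hn hp
      _ = (1/2) * (a ^ ζ * (Real.exp (-(2 * ζ)) * (n : ℝ) ^ (-(2 * ζ)))) := by ring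
      _ ≤ _ := by linarith
  have hcont : Continuous (fun u : ℝ => ∫ x in a..u,
      ((q n).eval x) ^ 2 * (ζ * x ^ (ζ - 1))) :=
    intervalIntegral.continuous_primitive (fun u v => pslb_int ζ hζ (q n) u v) a
  have ht2 : Tendsto (fun K' : ℕ => (1/2) * ∫ x in (pslbA ν K')..a,
      ((q n).eval x) ^ 2 * (ζ * x ^ (ζ - 1))) atTop
      (nhds ((1/2) * ∫ x in (0 : ℝ)..a, ((q n).eval x) ^ 2 * (ζ * x ^ (ζ - 1)))) := by
    refine Tendsto.const_mul _ ?_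
    have := ((hcont.tendsto 0).comp (pslbA_tendsto ν hν)).neg
    rw [← intervalIntegral.integral_symm] at this
    refine this.congr fun K' => ?_
    simp only [Function.comp]
    rw [← intervalIntegral.integral_symm]
  obtain ⟨K', hK', hK2⟩ := ((ht2.eventually (lt_mem_nhds hlt)).and
    (eventually_gt_atTop K)).exists
  exact ⟨n, K', hnN, hn1, hK2, hK'⟩

lemma pslb_cellw (ζ ν : ℝ) (hζ : 0 < ζ) (k : ℕ) :
    ∫ x in (pslbA ν (k+1))..(pslbA ν k), ζ * x ^ (ζ - 1) =
      (pslbA ν k) ^ ζ - (pslbA ν (k+1)) ^ ζ := by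
  rw [intervalIntegral.integral_const_mul, integral_rpow (Or.inl (by linarith)), sub_add_cancel]
  field_simp

lemma pslb_cell (ζ ν : ℝ) (hζ : 0 < ζ) (hν : 0 < ν) (p : Polynomial ℝ) (k : ℕ) :
    ∃ l : ℝ, pslbA ν (k+1) ≤ l ∧ l ≤ pslbA ν k ∧
      ∫ x in (pslbA ν (k+1))..(pslbA ν k), (p.eval x) ^ 2 * (ζ * x ^ (ζ - 1)) ≤
        ((pslbA ν k) ^ ζ - (pslbA ν (k+1)) ^ ζ) * (p.eval l) ^ 2 := by
  have hle : pslbA ν (k+1) ≤ pslbA ν k := pslbA_anti ν hν (Nat.le_succ k)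
  obtain ⟨l, hl, hmax⟩ := isCompact_Icc.exists_isMaxOn (nonempty_Icc.2 hle)
    ((p.continuous.pow 2).continuousOn)
  refine ⟨l, hl.1, hl.2, ?_⟩
  rw [← pslb_cellw ζ ν hζ k, mul_comm, ← intervalIntegral.integral_const_mul]
  refine intervalIntegral.integral_mono_on hle (pslb_int ζ hζ p _ _) ?_ fun x hx => ?_
  · exact ((intervalIntegral.intervalIntegrable_rpow' (by linarith)).const_mul _).const_mul _
  · have hx0 : 0 < x := (pslbA_pos ν _).trans_le hx.1
    exact mul_le_mul_of_nonneg_right (hmax hx) (by positivity)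

lemma pslb_block (K : ℕ → ℕ) (hK : StrictMono K) (f : ℕ → ℕ) :
    ∃ g : ℕ → ℕ, ∀ i k, K i ≤ k → k < K (i + 1) → g k = f i := by
  refine ⟨fun k => f (Nat.findGreatest (fun i => K i ≤ k) k), fun i k h1 h2 => ?_⟩
  have hik : i ≤ k := (hK.id_le i).trans h1
  have : Nat.findGreatest (fun i => K i ≤ k) k = i := by
    rw [Nat.findGreatest_eq_iff]
    refine ⟨hik, fun _ => h1, fun {j} hj _ h => ?_⟩
    have := hK.monotone (Nat.succ_le_of_lt hj)
    simp only [Nat.succ_eq_add_one] at this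
    omega
  simp only [this]

lemma pslb_lam (ζ ν ε : ℝ) (hζ : 0 < ζ) (hν : 0 < ν) (hε : 0 < ε)
    (q : ℕ → Polynomial ℝ)
    (hdeg : ∀ n : ℕ, 1 ≤ n → (q n).natDegree ≤ n)
    (hq0 : ∀ n : ℕ, 1 ≤ n → (q n).eval 0 = 1) :
    ∃ lam : ℕ → ℝ, (∀ k, pslbA ν (k+1) ≤ lam k) ∧ (∀ k, lam k ≤ pslbA ν k) ∧
      ∀ N : ℕ, ∃ n, N ≤ n ∧ 1 ≤ n ∧ ∃ s : Finset ℕ, (n : ℝ) ^ (-(2 * ζ) - ε) <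
        (1/2) * ∑ k ∈ s, ((pslbA ν k) ^ ζ - (pslbA ν (k+1)) ^ ζ) * ((q n).eval (lam k)) ^ 2 := by
  choose n K' hN h1 hK h using pslb_step ζ ν ε hζ hν hε q hdeg hq0
  let K : ℕ → ℕ := fun i => Nat.rec 0 (fun i k => K' k i) i
  have hKs : ∀ i, K (i + 1) = K' (K i) i := fun i => rfl
  have hKm : StrictMono K := strictMono_nat_of_lt_succ fun i => by rw [hKs]; exact hK _ _
  obtain ⟨g, hg⟩ := pslb_block K hKm (fun i => n (K i) i)
  choose lam hl1 hl2 hl3 using fun k => pslb_cell ζ ν hζ hν (q (g k)) k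
  refine ⟨lam, hl1, hl2, fun N => ⟨n (K N) N, hN _ _, h1 _ _, Finset.Ico (K N) (K (N+1)), ?_⟩⟩
  refine (h (K N) N).trans_le ?_
  refine mul_le_mul_of_nonneg_left ?_ (by norm_num)
  rw [← hKs, intervalIntegral.integral_symm,
    ← intervalIntegral.sum_integral_adjacent_intervals_Ico (a := pslbA ν)
      (hKm.monotone (Nat.le_succ N)) (fun k _ => pslb_int ζ hζ _ _ _), ← Finset.sum_neg_distrib]
  refine Finset.sum_le_sum fun k hk => ?_
  rw [Finset.mem_Ico] at hk
  have := hl3 k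
  rw [hg N k hk.1 hk.2] at this
  rw [← intervalIntegral.integral_symm]
  exact this

lemma pslb_mnn (ζ ν : ℝ) (hζ : 0 < ζ) (hν : 0 < ν) (k : ℕ) :
    0 ≤ (pslbA ν k) ^ ζ - (pslbA ν (k+1)) ^ ζ :=
  sub_nonneg.2 (Real.rpow_le_rpow (pslbA_pos ν _).le (pslbA_anti ν hν (Nat.le_succ k)) hζ.le)

lemma pslb_tail (ζ ν : ℝ) (hζ : 0 < ζ) (hν : 0 < ν) (N : ℕ) :
    ∑' k : ℕ, ENNReal.ofReal ((pslbA ν (k + N)) ^ ζ - (pslbA ν (k + N + 1)) ^ ζ) =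
      ENNReal.ofReal ((pslbA ν N) ^ ζ) := by
  have hs : HasSum (fun k : ℕ => (pslbA ν (k + N)) ^ ζ - (pslbA ν (k + N + 1)) ^ ζ)
      ((pslbA ν N) ^ ζ) := by
    rw [hasSum_iff_tendsto_nat_of_nonneg (fun k => pslb_mnn ζ ν hζ hν (k + N))]
    have h1 : ∀ n : ℕ, ∑ k ∈ Finset.range n,
        ((pslbA ν (k + N)) ^ ζ - (pslbA ν (k + N + 1)) ^ ζ) =
        (pslbA ν N) ^ ζ - (pslbA ν (n + N)) ^ ζ := by
      intro n
      have := Finset.sum_range_sub' (fun k => (pslbA ν (k + N)) ^ ζ) n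
      simp only [zero_add] at this
      rw [← this]
      refine Finset.sum_congr rfl fun k _ => ?_
      rw [show k + 1 + N = k + N + 1 by ring]
    simp only [h1]
    have h2 : Tendsto (fun n : ℕ => (pslbA ν (n + N)) ^ ζ) atTop (nhds 0) := by
      have := ((tendsto_add_atTop_iff_nat N).2 (pslbA_tendsto ν hν)).rpow_const
        (p := ζ) (Or.inr hζ.le)
      rwa [Real.zero_rpow hζ.ne'] at this
    simpa using h2.const_sub ((pslbA ν N) ^ ζ)
  rw [← ENNReal.ofReal_tsum_of_nonneg (fun k => pslb_mnn ζ ν hζ hν (k + N)) hs.summable,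
    hs.tsum_eq]

noncomputable def pslbR (ζ ν : ℝ) (lam : ℕ → ℝ) : Measure ℝ :=
  Measure.sum fun k => ENNReal.ofReal ((pslbA ν k) ^ ζ - (pslbA ν (k+1)) ^ ζ) •
    Measure.dirac (lam k)

lemma pslbR_apply (ζ ν : ℝ) (lam : ℕ → ℝ) (s : Set ℝ) (hs : MeasurableSet s) :
    pslbR ζ ν lam s = ∑' k, ENNReal.ofReal ((pslbA ν k) ^ ζ - (pslbA ν (k+1)) ^ ζ) *
      s.indicator 1 (lam k) := by
  rw [pslbR, Measure.sum_apply _ hs]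
  simp [Measure.dirac_apply' _ hs]

lemma pslbR_null (ζ ν : ℝ) (lam : ℕ → ℝ) (s : Set ℝ) (hs : MeasurableSet s)
    (h : ∀ k, lam k ∈ s) : pslbR ζ ν lam sᶜ = 0 := by
  rw [pslbR_apply _ _ _ _ hs.compl]
  simp [h]

lemma pslbR_univ (ζ ν : ℝ) (hζ : 0 < ζ) (hν : 0 < ν) (lam : ℕ → ℝ) :
    pslbR ζ ν lam univ = ENNReal.ofReal ((pslbA ν 0) ^ ζ) := by
  rw [pslbR_apply _ _ _ _ MeasurableSet.univ, ← pslb_tail ζ ν hζ hν 0]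
  simp

lemma pslbR_ge (ζ ν : ℝ) (hζ : 0 < ζ) (hν : 0 < ν) (lam : ℕ → ℝ) (s : Set ℝ)
    (hs : MeasurableSet s) (N : ℕ) (h : ∀ k, N ≤ k → lam k ∈ s) :
    ENNReal.ofReal ((pslbA ν N) ^ ζ) ≤ pslbR ζ ν lam s := by
  rw [pslbR_apply _ _ _ _ hs, ← pslb_tail ζ ν hζ hν N]
  refine le_trans (le_of_eq ?_)
    (ENNReal.tsum_comp_le_tsum_of_injective (add_left_injective N) _)
  refine tsum_congr fun k => ?_
  simp [h (k + N) (Nat.le_add_left _ _)]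

lemma pslbR_le (ζ ν : ℝ) (hζ : 0 < ζ) (hν : 0 < ν) (lam : ℕ → ℝ) (s : Set ℝ)
    (hs : MeasurableSet s) (N : ℕ) (h : ∀ k, lam k ∈ s → N ≤ k) :
    pslbR ζ ν lam s ≤ ENNReal.ofReal ((pslbA ν N) ^ ζ) := by
  rw [pslbR_apply _ _ _ _ hs, ← pslb_tail ζ ν hζ hν N,
    ← (ENNReal.summable).sum_add_tsum_nat_add' (k := N)]
  rw [Finset.sum_eq_zero, zero_add]
  · refine ENNReal.tsum_le_tsum fun k => ?_
    refine mul_le_of_le_one_right' ?_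
    exact indicator_le_self' (by simp) _
  · intro k hk
    have : lam k ∉ s := fun hh => by
      have := h k hh
      rw [Finset.mem_range] at hk
      omega
    simp [this]

/-- Lower bound for non-adaptive (predefined-schedule) first-order methods: for any
problem-independent sequence of residual polynomials `q_n` (degree ≤ n, `q_n(0)=1`)
there is a quadratic problem with eigenvalues `λ_k = k^{-ν}(1+o(1))` and spectral
measure `ρ((0,λ]) = λ^ζ(1+o(1))` on which the losses exceed `n^{-2ζ-ε}` infinitely
often. (Here `lam k` denotes the eigenvalue `λ_{k+1}`.) -/
theorem predefined_schedule_lower_bound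
    (ζ ν ε : ℝ) (hζ : 0 < ζ) (hν : 0 < ν) (hε : 0 < ε)
    (q : ℕ → Polynomial ℝ)
    (hdeg : ∀ n : ℕ, 1 ≤ n → (q n).natDegree ≤ n)
    (hq0 : ∀ n : ℕ, 1 ≤ n → (q n).eval 0 = 1) :
    ∃ (ρ : Measure ℝ) (_ : IsFiniteMeasure ρ) (lam : ℕ → ℝ),
      ρ (Set.Ioc (0:ℝ) 1)ᶜ = 0 ∧
      (∀ k, 0 < lam k) ∧
      (∀ k, lam (k + 1) ≤ lam k) ∧
      ρ (Set.range lam)ᶜ = 0 ∧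
      Tendsto (fun k : ℕ => lam k * ((k : ℝ) + 1) ^ ν) atTop (nhds 1) ∧
      Tendsto (fun l : ℝ => (ρ (Set.Ioc 0 l)).toReal / l ^ ζ)
        (nhdsWithin 0 (Set.Ioi 0)) (nhds 1) ∧
      {n : ℕ | 1 ≤ n ∧
        (n : ℝ) ^ (-(2 * ζ) - ε) < (1/2) * ∫ l, ((q n).eval l) ^ 2 ∂ρ}.Infinite := by
  obtain ⟨lam, hl1, hl2, hinf⟩ := pslb_lam ζ ν ε hζ hν hε q hdeg hq0
  have hpos : ∀ k, 0 < lam k := fun k => (pslbA_pos ν _).trans_le (hl1 k)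
  have hle1 : ∀ k, lam k ≤ 1 := fun k => (hl2 k).trans
    ((pslbA_anti ν hν (Nat.zero_le k)).trans (by simp [pslbA]))
  have hfin : IsFiniteMeasure (pslbR ζ ν lam) :=
    ⟨by rw [pslbR_univ ζ ν hζ hν]; exact ENNReal.ofReal_lt_top⟩
  have hnull := pslbR_null ζ ν lam (Set.Ioc (0:ℝ) 1) measurableSet_Ioc
    (fun k => ⟨hpos k, hle1 k⟩)
  refine ⟨pslbR ζ ν lam, hfin, lam, hnull, hpos, fun k => (hl2 (k+1)).trans (hl1 k),
    pslbR_null ζ ν lam _ (countable_range lam).measurableSet (fun k => mem_range_self k),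
    ?_, ?_, ?_⟩
  · -- eigenvalue asymptotics
    have hx : Tendsto (fun k : ℕ => (1 + 1 / ((k : ℝ) + 1)) ^ (-ν)) atTop (nhds 1) := by
      have h1 : Tendsto (fun k : ℕ => 1 + 1 / ((k : ℝ) + 1)) atTop (nhds (1 + 0)) :=
        tendsto_one_div_add_atTop_nhds_zero_nat.const_add 1
      have := h1.rpow_const (p := -ν) (Or.inl (by norm_num))
      simpa using this
    refine tendsto_of_tendsto_of_tendsto_of_le_of_le hx tendsto_const_nhds (fun k => ?_)
      (fun k => ?_)
    · have hk : (0 : ℝ) < (k : ℝ) + 1 := by positivity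
      have e : (1 + 1 / ((k : ℝ) + 1)) ^ (-ν) = pslbA ν (k+1) * ((k : ℝ) + 1) ^ ν := by
        unfold pslbA
        push_cast
        rw [show (1 + 1 / ((k : ℝ) + 1)) = ((k : ℝ) + 1 + 1) / ((k : ℝ) + 1) by field_simp,
          Real.div_rpow (by positivity) hk.le, Real.rpow_neg hk.le, div_inv_eq_mul]
      simp only [e]
      exact mul_le_mul_of_nonneg_right (hl1 k) (by positivity)
    · have hk : (0 : ℝ) < (k : ℝ) + 1 := by positivity
      have e : 1 = pslbA ν k * ((k : ℝ) + 1) ^ ν := by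
        unfold pslbA
        rw [← Real.rpow_add hk]; simp
      exact (mul_le_mul_of_nonneg_right (hl2 k) (by positivity)).trans e.symm.le
  · -- spectral measure asymptotics
    set y : ℝ → ℝ := fun l => l ^ (1 / ν) with hy
    have hy0 : Tendsto y (nhdsWithin 0 (Set.Ioi 0)) (nhds 0) := by
      have : Tendsto y (nhds 0) (nhds (0 ^ (1 / ν))) :=
        (Real.continuousAt_rpow_const 0 (1/ν) (Or.inr (by positivity))).tendsto
      rw [Real.zero_rpow (by positivity)] at this
      exact this.mono_left nhdsWithin_le_nhds
    have hlo : Tendsto (fun l => (1 + y l) ^ (-(ν * ζ))) (nhdsWithin 0 (Set.Ioi 0)) (nhds 1) := by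
      have := (hy0.const_add 1).rpow_const (p := -(ν * ζ)) (Or.inl (by norm_num))
      simpa using this
    have hhi : Tendsto (fun l => (1 - y l) ^ (-(ν * ζ))) (nhdsWithin 0 (Set.Ioi 0)) (nhds 1) := by
      have := (hy0.const_sub 1).rpow_const (p := -(ν * ζ)) (Or.inl (by norm_num))
      simpa using this
    have hpow : ∀ l : ℝ, 0 < l → ∀ z : ℝ, 0 < z →
        (z * y l) ^ (-(ν * ζ)) = z ^ (-(ν * ζ)) / l ^ ζ := by
      intro l hl z hz
      have hyl : 0 < y l := by simp only [hy]; positivity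
      rw [Real.mul_rpow hz.le hyl.le, div_eq_mul_inv, ← Real.rpow_neg hl.le]
      congr 1
      simp only [hy]
      rw [← Real.rpow_mul hl.le]
      congr 1
      field_simp
    have hA : ∀ k : ℕ, (pslbA ν k) ^ ζ = ((k : ℝ) + 1) ^ (-(ν * ζ)) := by
      intro k
      unfold pslbA
      rw [← Real.rpow_mul (by positivity)]
      congr 1
      ring
    have hcmp : ∀ l : ℝ, 0 < l → ∀ k : ℕ, (pslbA ν k ≤ l ↔ (y l)⁻¹ ≤ (k : ℝ) + 1) := by
      intro l hl k
      have hk : (0 : ℝ) < (k : ℝ) + 1 := by positivity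
      have hyl : 0 < y l := by simp only [hy]; positivity
      have e : l = (y l)⁻¹ ^ (-ν) := by
        rw [Real.rpow_neg (by positivity), Real.inv_rpow hyl.le, inv_inv]
        simp only [hy]
        rw [← Real.rpow_mul hl.le, one_div, inv_mul_cancel₀ hν.ne', Real.rpow_one]
      unfold pslbA
      conv_lhs => rw [e]
      exact Real.rpow_le_rpow_iff_of_neg hk (by positivity) (by linarith)
    have hev : ∀ᶠ l in nhdsWithin (0:ℝ) (Set.Ioi 0), 0 < l ∧ y l < 1 / 3 :=
      (eventually_mem_nhdsWithin).and (hy0.eventually (gt_mem_nhds (by norm_num)))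
    refine tendsto_of_tendsto_of_tendsto_of_le_of_le' hlo hhi ?_ ?_
    · filter_upwards [hev] with l hl
      obtain ⟨hl, hy3⟩ := hl
      have hyl : 0 < y l := by simp only [hy]; positivity
      set N := ⌊(y l)⁻¹⌋₊ with hN
      have hN1 : (y l)⁻¹ ≤ (N : ℝ) + 1 := (Nat.lt_floor_add_one _).le
      have hN2 : (N : ℝ) ≤ (y l)⁻¹ := Nat.floor_le (by positivity)
      have h1 := pslbR_ge ζ ν hζ hν lam (Set.Ioc 0 l) measurableSet_Ioc N (fun k hk =>
        ⟨hpos k, (hl2 k).trans ((pslbA_anti ν hν hk).trans ((hcmp l hl N).2 hN1))⟩)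
      have h2 := ENNReal.toReal_mono (measure_ne_top _ _) h1
      rw [ENNReal.toReal_ofReal (by have := pslbA_pos ν N; positivity), hA] at h2
      refine le_trans ?_ (div_le_div_of_nonneg_right h2 (by positivity))
      rw [← hpow l hl _ (by positivity)]
      refine Real.rpow_le_rpow_of_nonpos (by positivity) ?_ (by have := mul_pos hν hζ; linarith)
      have := mul_le_mul_of_nonneg_right hN2 hyl.le
      rw [inv_mul_cancel₀ hyl.ne'] at this
      linarith
    · filter_upwards [hev] with l hl
      obtain ⟨hl, hy3⟩ := hl
      have hyl : 0 < y l := by simp only [hy]; positivity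
      have h3 : 3 < (y l)⁻¹ := by
        rw [lt_inv_comm₀ (by norm_num) hyl]; linarith
      obtain ⟨N, hN⟩ : ∃ N : ℕ, ⌈(y l)⁻¹⌉₊ = N + 2 := by
        have : 3 < ⌈(y l)⁻¹⌉₊ := Nat.lt_ceil.2 (by exact_mod_cast h3)
        exact ⟨⌈(y l)⁻¹⌉₊ - 2, by omega⟩
      have hN1 : (y l)⁻¹ ≤ (N : ℝ) + 2 := by
        have := Nat.le_ceil (y l)⁻¹
        rw [hN] at this
        exact_mod_cast this
      have h1 := pslbR_le ζ ν hζ hν lam (Set.Ioc 0 l) measurableSet_Ioc N (fun k hk => by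
        have h4 := (hcmp l hl (k+1)).1 ((hl1 k).trans hk.2)
        have h5 : (y l)⁻¹ ≤ ((k + 2 : ℕ) : ℝ) := by push_cast at h4 ⊢; linarith
        have h6 := Nat.ceil_le.2 h5
        omega)
      have h2 := ENNReal.toReal_mono ENNReal.ofReal_ne_top h1
      rw [ENNReal.toReal_ofReal (by have := pslbA_pos ν N; positivity), hA] at h2
      refine le_trans (div_le_div_of_nonneg_right h2 (by positivity)) ?_
      rw [← hpow l hl _ (by positivity)]
      refine Real.rpow_le_rpow_of_nonpos (by linarith) ?_ (by have := mul_pos hν hζ; linarith)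
      have := mul_le_mul_of_nonneg_right hN1 hyl.le
      rw [inv_mul_cancel₀ hyl.ne'] at this
      linarith
  · -- losses
    rw [Set.infinite_iff_exists_gt]
    intro N
    obtain ⟨n, hNn, hn1, s, hs⟩ := hinf (N + 1)
    refine ⟨n, ⟨hn1, hs.trans_le ?_⟩, by omega⟩
    refine mul_le_mul_of_nonneg_left ?_ (by norm_num)
    have hqint : Integrable (fun l => ((q n).eval l) ^ 2) (pslbR ζ ν lam) := by
      have h1 : IntegrableOn (fun l => ((q n).eval l) ^ 2) (Set.Icc 0 1) (pslbR ζ ν lam) :=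
        ((q n).continuous.pow 2).continuousOn.integrableOn_compact isCompact_Icc
      rw [IntegrableOn, Measure.restrict_eq_self_of_ae_mem] at h1
      · exact h1
      · have : ∀ᵐ l ∂(pslbR ζ ν lam), l ∈ Set.Ioc (0:ℝ) 1 := hnull
        filter_upwards [this] with l hl using Ioc_subset_Icc_self hl
    have hsum := hasSum_integral_measure hqint
    refine le_trans (le_of_eq ?_) (sum_le_hasSum s (fun k _ => ?_) hsum)
    · refine Finset.sum_congr rfl fun k _ => ?_
      rw [integral_smul_measure, integral_dirac,
        ENNReal.toReal_ofReal (pslb_mnn ζ ν hζ hν k), smul_eq_mul]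
    · exact integral_nonneg fun l => sq_nonneg _
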